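/- arXiv:2501.07940 — 2 statements merged into one kernel-verified Lean document; each statement's English description precedes it below -/
import Mathlib

section
/- Let c ∈ (0,√2) and p ∈ (0,1) with p > p₀. Then L(c,p,θ) ∈ (1, 1 + κ₂/(2κ₁)) for every θ ∈ (−∞, θ₁), and L(c,p,θ) ∈ (0, κ₂/(2κ₁)) for every θ ∈ (θ₁, θ₂). -/
/-!
With `a = κ₁`, `b = κ₂`, `s = √(2 - c²)` one has `a² + b² = c² = 2 - s²` and `a² b² = ξ`, and the
condition `p > p₀` says `(1 - a²)(1 - b²) > 0`, which with `a² + b² < 2` gives `0 < a < b < 1`.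
Then `θ₁ = -s / (1 - b²)` and
`θ₂ = -s / (1 - a²)`. Writing `t = -θ` and
`h(x) = (t (1 - x²) - s) / (1 - x² + x² t s)`, the arguments of the two arctangents in `L` are
`1 / (b h(b))` and `1 / (a h(a))`.

* For `θ < θ₁`, both are positive, so `L < 1 + b / (2a)` is immediate, and `L > 1` is equivalent to
  `arctan (a h(a)) / a > arctan (b h(b)) / b`. This holds because `h` decreases
  (`hfun_lt`) and `x ↦ arctan x / x` decreases (`mul_arctan_le`).
* For `θ₁ < θ < θ₂`, `h(b) < 0 < h(a)`, so `L > 0` is immediate, and `L < b / (2a)` is equivalent to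
  `b arctan (1 / (a h(a))) > a arctan (-b h(b))`. As `b > a`, it suffices that
  `-b h(b) ≤ 1 / (a h(a))`, a polynomial inequality (`cross_le`).
-/


open Real Filter Set

/-- `ξ = p c⁴ / 4`. -/
noncomputable def xiPar (c p : ℝ) : ℝ := p * c ^ 4 / 4

/-- `κ₁ = √((c² − √(c⁴ − 4ξ))/2)`. -/
noncomputable def kappa1 (c p : ℝ) : ℝ :=
  Real.sqrt ((c ^ 2 - Real.sqrt (c ^ 4 - 4 * xiPar c p)) / 2)

/-- `κ₂ = √((c² + √(c⁴ − 4ξ))/2)`. -/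
noncomputable def kappa2 (c p : ℝ) : ℝ :=
  Real.sqrt ((c ^ 2 + Real.sqrt (c ^ 4 - 4 * xiPar c p)) / 2)

/-- The function `L(c,p,θ)` from the paper. -/
noncomputable def Lfun (c p θ : ℝ) : ℝ :=
  (1 / 2) * (1 + kappa2 c p / kappa1 c p)
  + (1 / Real.pi) * Real.arctan
      ((kappa2 c p * (-(kappa1 c p) ^ 2 + xiPar c p + xiPar c p * θ * Real.sqrt (2 - c ^ 2))) /
       (xiPar c p * (θ * (kappa1 c p) ^ 2 + Real.sqrt (2 - c ^ 2) + θ * (1 - c ^ 2))))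
  - (kappa2 c p / (kappa1 c p * Real.pi)) * Real.arctan
      ((kappa1 c p * (-(kappa2 c p) ^ 2 + xiPar c p + xiPar c p * θ * Real.sqrt (2 - c ^ 2))) /
       (xiPar c p * (θ * (kappa2 c p) ^ 2 + Real.sqrt (2 - c ^ 2) + θ * (1 - c ^ 2))))

/-- The discontinuity point `θ₁ = −2√(2−c²)/(2−c² − c²√(1−p))`. -/
noncomputable def theta1 (c p : ℝ) : ℝ :=
  -2 * Real.sqrt (2 - c ^ 2) / (2 - c ^ 2 - c ^ 2 * Real.sqrt (1 - p))

/-- The discontinuity point `θ₂ = −2√(2−c²)/(2−c² + c²√(1−p))`. -/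
noncomputable def theta2 (c p : ℝ) : ℝ :=
  -2 * Real.sqrt (2 - c ^ 2) / (2 - c ^ 2 + c ^ 2 * Real.sqrt (1 - p))

/-- The threshold `p₀ = 4(c²−1)/c⁴`. -/
noncomputable def p0 (c : ℝ) : ℝ := 4 * (c ^ 2 - 1) / c ^ 4

/-- A form of the monotonicity of `x ↦ arctan x / x` on the positive half-line. -/
lemma mul_arctan_le {a b h : ℝ} (ha : 0 < a) (hab : a < b) (hh : 0 ≤ h) :
    a * arctan (b * h) ≤ b * arctan (a * h) := by
  have hd : ∀ x : ℝ, HasDerivAt (fun x => b * arctan (a * x) - a * arctan (b * x))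
      (b * (1 / (1 + (a * x) ^ 2) * (a * 1)) - a * (1 / (1 + (b * x) ^ 2) * (b * 1))) x := by
    intro x
    exact ((((hasDerivAt_id x).const_mul a).arctan).const_mul b).sub
      ((((hasDerivAt_id x).const_mul b).arctan).const_mul a)
  have hm : Monotone (fun x => b * arctan (a * x) - a * arctan (b * x)) := by
    refine monotone_of_deriv_nonneg (fun x => (hd x).differentiableAt) fun x => ?_
    rw [(hd x).deriv]
    have h1 : 1 / (1 + (b * x) ^ 2) ≤ 1 / (1 + (a * x) ^ 2) := by
      apply one_div_le_one_div_of_le (by positivity)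
      rw [mul_pow, mul_pow]
      gcongr
    have h2 : 0 < a * b := mul_pos ha (ha.trans hab)
    nlinarith
  have := hm hh
  simp at this
  linarith

/-- The function `x ↦ (t (1 - x²) - s) / (1 - x² + x² t s)` is strictly decreasing; in the variable
`x²` its derivative has the sign of `-s (t² - t s + 1)`. -/
lemma hfun_lt {a b s t : ℝ} (ha : 0 < a) (hab : a < b) (hb : b < 1) (hs : 0 < s)
    (hs2 : s ^ 2 < 2) (ht : 0 < t) :
    (t * (1 - b ^ 2) - s) / (1 - b ^ 2 + b ^ 2 * t * s) <
      (t * (1 - a ^ 2) - s) / (1 - a ^ 2 + a ^ 2 * t * s) := by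
  have hB : 0 < 1 - b ^ 2 := by nlinarith
  have hA : 0 < 1 - a ^ 2 := by nlinarith
  have hb0 : 0 < b := ha.trans hab
  rw [div_lt_div_iff₀ (by positivity) (by positivity)]
  have h1 : 0 < t ^ 2 - t * s + 1 := by nlinarith [sq_nonneg (t - s / 2)]
  have h2 : 0 < b ^ 2 - a ^ 2 := by nlinarith
  have h3 : 0 < s * (t ^ 2 - t * s + 1) * (b ^ 2 - a ^ 2) := by positivity
  nlinarith

/-- With `t = -θ`, the inequality `-b h(b) ≤ 1 / (a h(a))` after clearing denominators. -/
lemma cross_le {a b s t : ℝ} (ha : 0 < a) (hab : a < b) (hb : b < 1) (hs : 0 < s)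
    (ht : 0 < t) :
    (b * (s - t * (1 - b ^ 2))) * (a * (t * (1 - a ^ 2) - s)) ≤
      (1 - a ^ 2 + a ^ 2 * t * s) * (1 - b ^ 2 + b ^ 2 * t * s) := by
  have hB : 0 < 1 - b ^ 2 := by nlinarith
  have hA : 0 < 1 - a ^ 2 := by nlinarith
  have hb0 : 0 < b := ha.trans hab
  have key : (1 - a ^ 2 + a ^ 2 * t * s) * (1 - b ^ 2 + b ^ 2 * t * s) -
      (b * (s - t * (1 - b ^ 2))) * (a * (t * (1 - a ^ 2) - s)) =
      (1 - a ^ 2) * (1 - b ^ 2) + a * b * s ^ 2 + t * s * ((1 + a * b) * (a - b) ^ 2)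
      + t ^ 2 * ((a * b) ^ 2 * s ^ 2 + a * b * ((1 - a ^ 2) * (1 - b ^ 2))) := by
    ring
  have : 0 ≤ (1 - a ^ 2) * (1 - b ^ 2) + a * b * s ^ 2 + t * s * ((1 + a * b) * (a - b) ^ 2)
      + t ^ 2 * ((a * b) ^ 2 * s ^ 2 + a * b * ((1 - a ^ 2) * (1 - b ^ 2))) := by positivity
  linarith

lemma bound_left {a b s t : ℝ} (ha : 0 < a) (hab : a < b) (hb : b < 1) (hs : 0 < s)
    (hs2 : s ^ 2 = 2 - a ^ 2 - b ^ 2) (ht : s < t * (1 - b ^ 2)) :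
    (1 / 2) * (1 + b / a)
      + (1 / π) * arctan ((1 - b ^ 2 + b ^ 2 * t * s) / (b * (t * (1 - b ^ 2) - s)))
      - (b / (a * π)) * arctan ((1 - a ^ 2 + a ^ 2 * t * s) / (a * (t * (1 - a ^ 2) - s)))
      ∈ Ioo (1 : ℝ) (1 + b / (2 * a)) := by
  have hB : 0 < 1 - b ^ 2 := by nlinarith
  have hA : 0 < 1 - a ^ 2 := by nlinarith
  have hb0 : 0 < b := ha.trans hab
  have ht0 : 0 < t := pos_of_mul_pos_left (hs.trans ht) hB.le
  have htb : 0 < t * (1 - b ^ 2) - s := by linarith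
  have hta : 0 < t * (1 - a ^ 2) - s := by
    have : t * (1 - b ^ 2) ≤ t * (1 - a ^ 2) := by gcongr
    linarith
  have hpi := pi_pos
  have hh := hfun_lt ha hab hb hs (by nlinarith) ht0
  set ha' := (t * (1 - a ^ 2) - s) / (1 - a ^ 2 + a ^ 2 * t * s) with hha
  set hb' := (t * (1 - b ^ 2) - s) / (1 - b ^ 2 + b ^ 2 * t * s) with hhb
  have hbpos : 0 < hb' := by positivity
  have e1 : (1 - b ^ 2 + b ^ 2 * t * s) / (b * (t * (1 - b ^ 2) - s)) = (b * hb')⁻¹ := by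
    rw [hhb]; field_simp
  have e2 : (1 - a ^ 2 + a ^ 2 * t * s) / (a * (t * (1 - a ^ 2) - s)) = (a * ha')⁻¹ := by
    rw [hha]; field_simp
  have hapos : 0 < ha' := hbpos.trans hh
  rw [e1, e2, arctan_inv_of_pos (by positivity), arctan_inv_of_pos (by positivity)]
  have m1 := mul_arctan_le ha hab hbpos.le
  have m2 : arctan (a * hb') < arctan (a * ha') := arctan_strictMono (by gcongr)
  have m3 : 0 < arctan (b * hb') := arctan_pos.2 (by positivity)
  have m4 := arctan_lt_pi_div_two (a * ha')
  have m5 : b * arctan (a * hb') < b * arctan (a * ha') := by gcongr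
  set X := arctan (b * hb')
  set Y := arctan (a * ha')
  have f1 : (1 / 2) * (1 + b / a) + (1 / π) * (π / 2 - X) - (b / (a * π)) * (π / 2 - Y) - 1
      = (b * Y - a * X) / (a * π) := by field_simp; ring
  have f2 : (1 + b / (2 * a)) -
      ((1 / 2) * (1 + b / a) + (1 / π) * (π / 2 - X) - (b / (a * π)) * (π / 2 - Y))
      = (a * X + b * (π / 2 - Y)) / (a * π) := by field_simp; ring
  have g1 : 0 < (b * Y - a * X) / (a * π) := div_pos (by linarith) (by positivity)
  have g2 : 0 < (a * X + b * (π / 2 - Y)) / (a * π) := by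
    have : 0 < π / 2 - Y := by linarith
    positivity
  constructor <;> linarith

lemma bound_right {a b s t : ℝ} (ha : 0 < a) (hab : a < b) (hb : b < 1) (hs : 0 < s)
    (htb : t * (1 - b ^ 2) < s) (hta : s < t * (1 - a ^ 2)) :
    (1 / 2) * (1 + b / a)
      + (1 / π) * arctan ((1 - b ^ 2 + b ^ 2 * t * s) / (b * (t * (1 - b ^ 2) - s)))
      - (b / (a * π)) * arctan ((1 - a ^ 2 + a ^ 2 * t * s) / (a * (t * (1 - a ^ 2) - s)))
      ∈ Ioo (0 : ℝ) (b / (2 * a)) := by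
  have hB : 0 < 1 - b ^ 2 := by nlinarith
  have hA : 0 < 1 - a ^ 2 := by nlinarith
  have hb0 : 0 < b := ha.trans hab
  have ht0 : 0 < t := pos_of_mul_pos_left (hs.trans hta) hA.le
  have htb' : 0 < s - t * (1 - b ^ 2) := by linarith
  have hta' : 0 < t * (1 - a ^ 2) - s := by linarith
  have hpi := pi_pos
  set u := b * (s - t * (1 - b ^ 2)) / (1 - b ^ 2 + b ^ 2 * t * s) with hu
  have hupos : 0 < u := by positivity
  have e1 : (1 - b ^ 2 + b ^ 2 * t * s) / (b * (t * (1 - b ^ 2) - s)) = -u⁻¹ := by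
    rw [hu, inv_div, ← div_neg]; congr 1; ring
  have m1 : u ≤ (1 - a ^ 2 + a ^ 2 * t * s) / (a * (t * (1 - a ^ 2) - s)) := by
    rw [hu, div_le_div_iff₀ (by positivity) (by positivity)]
    exact cross_le ha hab hb hs ht0
  rw [e1, arctan_neg, arctan_inv_of_pos hupos]
  have m2 := arctan_mono m1
  have m3 : 0 < arctan u := arctan_pos.2 hupos
  have m4 := arctan_lt_pi_div_two ((1 - a ^ 2 + a ^ 2 * t * s) / (a * (t * (1 - a ^ 2) - s)))
  set X := arctan u
  set Y := arctan ((1 - a ^ 2 + a ^ 2 * t * s) / (a * (t * (1 - a ^ 2) - s)))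
  have f1 : (1 / 2) * (1 + b / a) + (1 / π) * (-(π / 2 - X)) - (b / (a * π)) * Y
      = (a * X + b * (π / 2 - Y)) / (a * π) := by field_simp; ring
  have f2 : b / (2 * a) -
      ((1 / 2) * (1 + b / a) + (1 / π) * (-(π / 2 - X)) - (b / (a * π)) * Y)
      = (b * Y - a * X) / (a * π) := by field_simp; ring
  have g1 : 0 < (b * Y - a * X) / (a * π) := div_pos (by nlinarith) (by positivity)
  have g2 : 0 < (a * X + b * (π / 2 - Y)) / (a * π) := by
    have : 0 < π / 2 - Y := by linarith
    positivity
  constructor <;> linarith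

/-- The facts about `κ₁, κ₂, θ₁, θ₂` from which the bounds follow. -/
lemma params (c p : ℝ) (hc : c ∈ Ioo 0 (√2)) (hp : p ∈ Ioo 0 1) (hpp : p > p0 c) :
    0 < kappa1 c p ∧ kappa1 c p < kappa2 c p ∧ kappa2 c p < 1 ∧ 0 < √(2 - c ^ 2) ∧
    √(2 - c ^ 2) ^ 2 = 2 - kappa1 c p ^ 2 - kappa2 c p ^ 2 ∧
    c ^ 2 = kappa1 c p ^ 2 + kappa2 c p ^ 2 ∧
    xiPar c p = kappa1 c p ^ 2 * kappa2 c p ^ 2 ∧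
    theta1 c p = -√(2 - c ^ 2) / (1 - kappa2 c p ^ 2) ∧
    theta2 c p = -√(2 - c ^ 2) / (1 - kappa1 c p ^ 2) := by
  obtain ⟨hc0, hc2⟩ := hc
  obtain ⟨hp0, hp1⟩ := hp
  have hcc : c ^ 2 < 2 := by
    have := Real.sq_sqrt (show (0 : ℝ) ≤ 2 by norm_num)
    nlinarith
  have hq : 0 < √(1 - p) := Real.sqrt_pos.2 (by linarith)
  have hq2 : √(1 - p) ^ 2 = 1 - p := Real.sq_sqrt (by linarith)
  have hq1 : √(1 - p) < 1 := by nlinarith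
  have hr : √(c ^ 4 - 4 * xiPar c p) = c ^ 2 * √(1 - p) := by
    rw [show c ^ 4 - 4 * xiPar c p = (c ^ 2) ^ 2 * (1 - p) by unfold xiPar; ring,
      Real.sqrt_mul (by positivity), Real.sqrt_sq (by positivity)]
  have hcpos : 0 < c ^ 2 := by positivity
  have hrlt : c ^ 2 * √(1 - p) < c ^ 2 := by nlinarith
  have hrpos : 0 < c ^ 2 * √(1 - p) := by positivity
  have hr2 : (c ^ 2 * √(1 - p)) ^ 2 = c ^ 4 * (1 - p) := by rw [mul_pow, hq2]; ring
  have ha2 : kappa1 c p ^ 2 = (c ^ 2 - c ^ 2 * √(1 - p)) / 2 := by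
    unfold kappa1; rw [hr, Real.sq_sqrt (by linarith)]
  have hb2 : kappa2 c p ^ 2 = (c ^ 2 + c ^ 2 * √(1 - p)) / 2 := by
    unfold kappa2; rw [hr, Real.sq_sqrt (by linarith)]
  have ha0 : 0 < kappa1 c p := by unfold kappa1; rw [hr]; exact Real.sqrt_pos.2 (by linarith)
  have hb0 : 0 ≤ kappa2 c p := Real.sqrt_nonneg _
  have hpc : 4 * (c ^ 2 - 1) < p * c ^ 4 := by
    have : p0 c < p := hpp
    rwa [p0, div_lt_iff₀ (by positivity)] at this
  -- `p > p₀` rewrites as `r² < (2 - c²)²`, where `r = c² √(1 - p)`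
  have hrc : c ^ 2 * √(1 - p) < 2 - c ^ 2 := by
    apply lt_of_pow_lt_pow_left₀ 2 (by linarith)
    rw [hr2]; nlinarith
  have hs2 : √(2 - c ^ 2) ^ 2 = 2 - c ^ 2 := Real.sq_sqrt (by linarith)
  refine ⟨ha0, ?_, ?_, Real.sqrt_pos.2 (by linarith), ?_, ?_, ?_, ?_, ?_⟩
  · apply lt_of_pow_lt_pow_left₀ 2 hb0; linarith
  · apply lt_of_pow_lt_pow_left₀ 2 (by norm_num); linarith
  · linarith
  · linarith
  · rw [ha2, hb2, xiPar]; linear_combination (1 / 4) * hr2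
  · rw [theta1, hb2, show 2 - c ^ 2 - c ^ 2 * √(1 - p) =
      2 * (1 - (c ^ 2 + c ^ 2 * √(1 - p)) / 2) by ring,
      show -2 * √(2 - c ^ 2) = 2 * (-√(2 - c ^ 2)) by ring, mul_div_mul_left _ _ two_ne_zero]
  · rw [theta2, ha2, show 2 - c ^ 2 + c ^ 2 * √(1 - p) =
      2 * (1 - (c ^ 2 - c ^ 2 * √(1 - p)) / 2) by ring,
      show -2 * √(2 - c ^ 2) = 2 * (-√(2 - c ^ 2)) by ring, mul_div_mul_left _ _ two_ne_zero]

/-- For `c ∈ (0,√2)`, `p ∈ (0,1)` with `p > p₀`: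
`L(c,p,θ) ∈ (1, 1 + κ₂/(2κ₁))` for all `θ ∈ (−∞, θ₁)` and
`L(c,p,θ) ∈ (0, κ₂/(2κ₁))` for all `θ ∈ (θ₁, θ₂)`. -/
theorem stmt12 (c p : ℝ) (hc : c ∈ Set.Ioo 0 (Real.sqrt 2)) (hp : p ∈ Set.Ioo 0 1)
    (hpp : p > p0 c) :
    (∀ θ ∈ Set.Iio (theta1 c p),
      Lfun c p θ ∈ Set.Ioo (1 : ℝ) (1 + kappa2 c p / (2 * kappa1 c p))) ∧
    (∀ θ ∈ Set.Ioo (theta1 c p) (theta2 c p),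
      Lfun c p θ ∈ Set.Ioo (0 : ℝ) (kappa2 c p / (2 * kappa1 c p))) := by
  obtain ⟨ha, hab, hb, hs, hs2, hcc, hxi, h1, h2⟩ := params c p hc hp hpp
  rw [h1, h2]
  have hL : ∀ θ, Lfun c p θ = (1 / 2) * (1 + kappa2 c p / kappa1 c p)
      + (1 / π) * arctan ((1 - kappa2 c p ^ 2 + kappa2 c p ^ 2 * (-θ) * √(2 - c ^ 2)) /
          (kappa2 c p * (-θ * (1 - kappa2 c p ^ 2) - √(2 - c ^ 2))))
      - (kappa2 c p / (kappa1 c p * π)) *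
        arctan ((1 - kappa1 c p ^ 2 + kappa1 c p ^ 2 * (-θ) * √(2 - c ^ 2)) /
          (kappa1 c p * (-θ * (1 - kappa1 c p ^ 2) - √(2 - c ^ 2)))) := by
    intro θ
    unfold Lfun
    rw [hxi]
    generalize √(2 - c ^ 2) = s
    rw [hcc]
    generalize kappa1 c p = a at *
    generalize kappa2 c p = b at *
    have hb0 : 0 < b := ha.trans hab
    -- both fractions are expanded by `-a² b`, respectively `-b² a`, also at a zero denominator
    have k1 : -(a ^ 2 * b) ≠ 0 := by simp [ha.ne', hb0.ne']
    have k2 : -(b ^ 2 * a) ≠ 0 := by simp [ha.ne', hb0.ne']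
    rw [← mul_div_mul_left (1 - b ^ 2 + b ^ 2 * (-θ) * s) _ k1,
      ← mul_div_mul_left (1 - a ^ 2 + a ^ 2 * (-θ) * s) _ k2]
    congr! 4 <;> ring
  have hb0 : 0 < kappa2 c p := ha.trans hab
  have hB : 0 < 1 - kappa2 c p ^ 2 := by nlinarith
  have hA : 0 < 1 - kappa1 c p ^ 2 := by nlinarith
  refine ⟨fun θ hθ => ?_, fun θ hθ => ?_⟩
  · rw [hL]
    have := (lt_div_iff₀ hB).1 hθ
    exact bound_left ha hab hb hs hs2 (by linarith)
  · rw [hL]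
    have t1 := (div_lt_iff₀ hB).1 hθ.1
    have t2 := (lt_div_iff₀ hA).1 hθ.2
    exact bound_right ha hab hb hs (by linarith) (by linarith)
end

section
/- (Corollary 3.2, reduced form.) Let c ∈ (0,√2) and p ∈ (16/25, 1) with p > p₀. Then there is no θ < θ₂ with θ ≠ θ₁ such that L(c,p,θ) is a positive integer. (Hence the beam problem u_ττ + u_xxxx + au⁺ − bu⁻ = 1 with b/a = p c⁴/4 has no even one-troughed travelling wave solution with wave speed parameter c.) -/
/-!
Write `a = κ₁`, `b = κ₂`, `r = b / a`, `w = √(2 - c²)`, `t = -θ`. Then `a² + b² = c²` and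
`a² b² = ξ`, and `p > p₀` says `(1 - a²)(1 - b²) > 0`, so that `0 < a < b < 1`; the bound
`p > 16/25` says `r < 2`. With `S = w / (1 - a²) < T = w / (1 - b²)` one has `θ₂ = -S`,
`θ₁ = -T`, and the two arguments of `arctan` in `L` are the reciprocals of
`(b t - b T) / (1 + b t · b T)` and `(a t - a S) / (1 + a t · a S)`, the tangents of differences
of arctangents. Put `α = arctan (a t) - arctan (a S)`, which lies in `(0, π/2)`, and
`β = arctan (b t) - arctan (b T)`.

* If `t > T` then `L = 1 + (r α - β) / π`, and if `S < t < T` then `L = (r α - β) / π`.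
* The function `f t = r arctan (a t) - arctan (b t)` is monotone on `[0, ∞)`, because
  its derivative is `b / (1 + a² t²) - b / (1 + b² t²)`. Since
  `r α - β = f t - f T + r (arctan (a T) - arctan (a S))`, this gives `r α - β > 0` when `t > T`
  and `r α - β < r · π/2 < π` when `t < T`.

As `r α < π` as well, `1 < L < 2` when `t > T` and `L < 1` when `S < t < T`: in neither case is
`L` a positive integer.
-/

open Real Filter Set

/-- Monotonicity of `t ↦ (b/a) arctan (a t) - arctan (b t)` on `[0, ∞)`. -/
lemma arctan_comb_mono {a b : ℝ} (ha : 0 < a) (hab : a < b) :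
    MonotoneOn (fun t : ℝ => b / a * arctan (a * t) - arctan (b * t)) (Set.Ici 0) := by
  have hd : ∀ t : ℝ, HasDerivAt (fun t : ℝ => b / a * arctan (a * t) - arctan (b * t))
      (b / a * (1 / (1 + (a * t) ^ 2) * (a * 1)) - 1 / (1 + (b * t) ^ 2) * (b * 1)) t := by
    intro t
    exact ((((hasDerivAt_id t).const_mul a).arctan).const_mul (b / a)).sub
      (((hasDerivAt_id t).const_mul b).arctan)
  refine monotoneOn_of_deriv_nonneg (convex_Ici 0)
    (fun t _ => (hd t).continuousAt.continuousWithinAt)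
    (fun t _ => (hd t).differentiableAt.differentiableWithinAt) ?_
  intro t _
  rw [(hd t).deriv]
  have hb : 0 < b := ha.trans hab
  have h1 : b / a * (1 / (1 + (a * t) ^ 2) * (a * 1)) = b * (1 / (1 + (a * t) ^ 2)) := by
    field_simp
  have h2 : (1 : ℝ) / (1 + (b * t) ^ 2) ≤ 1 / (1 + (a * t) ^ 2) := by
    apply one_div_le_one_div_of_le (by positivity)
    rw [mul_pow, mul_pow]
    gcongr
  rw [h1]
  nlinarith

lemma arctan_sub_arctan {x y : ℝ} (hx : 0 ≤ x) (hy : 0 ≤ y) :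
    arctan x - arctan y = arctan ((x - y) / (1 + x * y)) := by
  have h := arctan_add (x := x) (y := -y) (by nlinarith [mul_nonneg hx hy])
  rw [arctan_neg] at h
  rw [sub_eq_add_neg, h]
  congr 2
  ring

/-- The arguments of `arctan` in `L`: with `k ∈ (0, 1)` one of the two frequencies, `l` the other
and `t = -θ`, the argument is the reciprocal of `tan (arctan (k t) - arctan (k w / (1 - k²)))`. -/
lemma arg_eq {k l w t : ℝ} (hk : 0 < k) (hk1 : k ^ 2 < 1) (hl : 0 < l) (hw : 0 < w) (ht : 0 < t) :
    (k * (-l ^ 2 + k ^ 2 * l ^ 2 + k ^ 2 * l ^ 2 * (-t) * w)) /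
       (k ^ 2 * l ^ 2 * ((-t) * l ^ 2 + w + (-t) * (1 - (k ^ 2 + l ^ 2))))
    = ((k * t - k * (w / (1 - k ^ 2))) / (1 + k * t * (k * (w / (1 - k ^ 2)))))⁻¹ := by
  have h1 : 0 < 1 - k ^ 2 := by linarith
  have e1 : k * t - k * (w / (1 - k ^ 2)) = k * (t * (1 - k ^ 2) - w) / (1 - k ^ 2) := by
    field_simp
  have e2 : 1 + k * t * (k * (w / (1 - k ^ 2))) = (1 - k ^ 2 + k ^ 2 * t * w) / (1 - k ^ 2) := by
    field_simp
  have e3 : (-t) * l ^ 2 + w + (-t) * (1 - (k ^ 2 + l ^ 2)) = -(t * (1 - k ^ 2) - w) := by ring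
  have e4 : k * (-l ^ 2 + k ^ 2 * l ^ 2 + k ^ 2 * l ^ 2 * (-t) * w)
      = -(k * l ^ 2 * (1 - k ^ 2 + k ^ 2 * t * w)) := by ring
  rw [e1, e2, e3, e4, div_div_div_cancel_right₀ h1.ne', inv_div, mul_neg, neg_div_neg_eq,
    show k * l ^ 2 * (1 - k ^ 2 + k ^ 2 * t * w)
      = (k * l ^ 2) * (1 - k ^ 2 + k ^ 2 * t * w) by ring,
    show k ^ 2 * l ^ 2 * (t * (1 - k ^ 2) - w)
      = (k * l ^ 2) * (k * (t * (1 - k ^ 2) - w)) by ring,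
    mul_div_mul_left _ _ (by positivity)]

/-- `arctan` of the reciprocal of the tangent of a positive difference of arctangents. -/
lemma arctan_inv_sub {x y : ℝ} (hy : 0 ≤ y) (hxy : y < x) :
    arctan ((x - y) / (1 + x * y))⁻¹ = π / 2 - (arctan x - arctan y) := by
  have hx : 0 ≤ x := hy.trans hxy.le
  rw [arctan_sub_arctan hx hy, arctan_inv_of_pos]
  exact div_pos (by linarith) (by nlinarith [mul_nonneg hx hy])

lemma arctan_inv_sub_neg {x y : ℝ} (hx : 0 ≤ x) (hxy : x < y) :
    arctan ((x - y) / (1 + x * y))⁻¹ = -(π / 2) - (arctan x - arctan y) := by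
  have hy : 0 ≤ y := hx.trans hxy.le
  rw [arctan_sub_arctan hx hy, arctan_inv_of_neg]
  exact div_neg_of_neg_of_pos (by linarith) (by nlinarith [mul_nonneg hx hy])

/-- The exclusion of positive integer values, in terms of `a = κ₁`, `b = κ₂`, `t = -θ`. -/
lemma no_integer {a b S T t : ℝ} (ha : 0 < a) (hab : a < b) (hb2 : b < 2 * a)
    (hS : 0 < S) (hST : S < T) (ht : S < t) (htT : t ≠ T) (m : ℕ) (hm : 0 < m)
    (h : (1 / 2) * (1 + b / a)
      + (1 / π) * arctan ((b * t - b * T) / (1 + b * t * (b * T)))⁻¹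
      - (b / (a * π)) * arctan ((a * t - a * S) / (1 + a * t * (a * S)))⁻¹ = (m : ℝ)) : False := by
  have hb : 0 < b := ha.trans hab
  have hπ := pi_pos
  have ht0 : 0 < t := hS.trans ht
  have hT0 : 0 < T := hS.trans hST
  have hr0 : 0 < b / a := div_pos hb ha
  have hr2 : b / a < 2 := by rw [div_lt_iff₀ ha]; exact hb2
  have hm1 : (1 : ℝ) ≤ m := by exact_mod_cast hm
  have hbase : ∀ z, S < z → 0 < arctan (a * z) - arctan (a * S) ∧
      arctan (a * z) - arctan (a * S) < π / 2 := fun z hz =>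
    ⟨sub_pos.2 (arctan_strictMono (mul_lt_mul_of_pos_left hz ha)), by
      linarith [arctan_lt_pi_div_two (a * z), arctan_pos.2 (mul_pos ha hS)]⟩
  have hlt : ∀ z, S < z → b / a * (arctan (a * z) - arctan (a * S)) < π := fun z hz => by
    nlinarith [hbase z hz]
  rw [arctan_inv_sub (by positivity) (mul_lt_mul_of_pos_left ht ha),
    show b / (a * π) = b / a * (1 / π) by field_simp] at h
  rcases lt_or_gt_of_ne htT with hlt' | hgt
  · rw [arctan_inv_sub_neg (by positivity) (mul_lt_mul_of_pos_left hlt' hb)] at h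
    have hmono := arctan_comb_mono ha hab (mem_Ici.2 ht0.le) (mem_Ici.2 hT0.le) hlt'.le
    simp only at hmono
    have h3 := hlt T hST
    have h4 : b / a * (arctan (a * t) - arctan (a * S)) - (arctan (b * t) - arctan (b * T))
        = m * π := by
      rw [← h]; field_simp; ring
    nlinarith
  · rw [arctan_inv_sub (by positivity) (mul_lt_mul_of_pos_left hgt hb)] at h
    have hmono := arctan_comb_mono ha hab (mem_Ici.2 hT0.le) (mem_Ici.2 ht0.le) hgt.le
    simp only at hmono
    have h3 := hlt t ht
    have h5 := mul_pos hr0 (hbase T hST).1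
    have h6 := arctan_strictMono (mul_lt_mul_of_pos_left hgt hb)
    have h4 : b / a * (arctan (a * t) - arctan (a * S)) - (arctan (b * t) - arctan (b * T))
        = (m - 1) * π := by
      rw [← h]; field_simp; ring
    have h7 : (0 : ℝ) < (m : ℝ) - 1 := by
      by_contra! hcon
      nlinarith
    have h8 : (2 : ℝ) ≤ m := by
      have : 1 < m := by exact_mod_cast (sub_pos.1 h7)
      exact_mod_cast this
    nlinarith

/-- Corollary 3.2, reduced form: For `c ∈ (0,√2)` and
`p ∈ (16/25, 1)` with `p > p₀`, there is no `θ < θ₂` with `θ ≠ θ₁` such that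
`L(c,p,θ)` is a positive integer. -/
theorem stmt16 (c p : ℝ) (hc : c ∈ Set.Ioo 0 (Real.sqrt 2))
    (hp : p ∈ Set.Ioo (16 / 25 : ℝ) 1) (hpp : p > p0 c) :
    ¬ ∃ θ : ℝ, θ < theta2 c p ∧ θ ≠ theta1 c p ∧
      ∃ m : ℕ, 0 < m ∧ Lfun c p θ = (m : ℝ) := by
  rintro ⟨θ, hθ2, hθ1, m, hm, hL⟩
  obtain ⟨hc0, hc2⟩ := hc
  obtain ⟨hp1, hp2⟩ := hp
  have hcc : c ^ 2 < 2 := by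
    have := (lt_sqrt hc0.le).1 hc2
    exact this
  have hc2pos : 0 < c ^ 2 := by positivity
  obtain ⟨s, hs⟩ : ∃ s, s = √(1 - p) := ⟨_, rfl⟩
  obtain ⟨w, hw⟩ : ∃ w, w = √(2 - c ^ 2) := ⟨_, rfl⟩
  have hs0 : 0 < s := hs ▸ sqrt_pos.2 (by linarith)
  have hs2 : s ^ 2 = 1 - p := by rw [hs, sq_sqrt (by linarith)]
  have hs35 : s < 3 / 5 := by nlinarith
  have hw0 : 0 < w := hw ▸ sqrt_pos.2 (by linarith)
  have hdisc : √(c ^ 4 - 4 * xiPar c p) = c ^ 2 * s := by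
    rw [show c ^ 4 - 4 * xiPar c p = (c ^ 2 * s) ^ 2 by
      rw [mul_pow, hs2]; unfold xiPar; ring]
    exact sqrt_sq (by positivity)
  obtain ⟨a, haK⟩ : ∃ a, a = kappa1 c p := ⟨_, rfl⟩
  obtain ⟨b, hbK⟩ : ∃ b, b = kappa2 c p := ⟨_, rfl⟩
  have hapos : 0 < (c ^ 2 - c ^ 2 * s) / 2 := by nlinarith
  have hbpos : 0 < (c ^ 2 + c ^ 2 * s) / 2 := by positivity
  have ha2 : a ^ 2 = (c ^ 2 - c ^ 2 * s) / 2 := by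
    rw [haK, kappa1, hdisc, sq_sqrt hapos.le]
  have hb2 : b ^ 2 = (c ^ 2 + c ^ 2 * s) / 2 := by
    rw [hbK, kappa2, hdisc, sq_sqrt hbpos.le]
  have ha : 0 < a := by rw [haK, kappa1, hdisc]; exact sqrt_pos.2 hapos
  have hb : 0 < b := by rw [hbK, kappa2, hdisc]; exact sqrt_pos.2 hbpos
  have hcs : 0 < c ^ 2 * s := by positivity
  have hab : a < b := lt_of_pow_lt_pow_left₀ 2 hb.le (by rw [ha2, hb2]; linarith)
  have hb2a : b < 2 * a := lt_of_pow_lt_pow_left₀ 2 (by positivity) (by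
    rw [mul_pow, ha2, hb2]; nlinarith)
  have hsum : c ^ 2 = a ^ 2 + b ^ 2 := by rw [ha2, hb2]; ring
  have hxi : xiPar c p = a ^ 2 * b ^ 2 := by
    rw [ha2, hb2, xiPar, show p = 1 - s ^ 2 by linarith]; ring
  have ha1 : a ^ 2 < 1 := by nlinarith
  -- `p > p₀` reads `1 - c² + ξ > 0`, which factors as `(1 - a²)(1 - b²) > 0`.
  have hb1 : b ^ 2 < 1 := by
    have h1 : 4 * (c ^ 2 - 1) < p * c ^ 4 := by
      have : 4 * (c ^ 2 - 1) / c ^ 4 < p := hpp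
      rwa [div_lt_iff₀ (by positivity)] at this
    have h2 : 0 < (1 - a ^ 2) * (1 - b ^ 2) := by
      unfold xiPar at hxi
      nlinarith
    have := (pos_iff_pos_of_mul_pos h2).1 (by linarith)
    linarith
  have hθ2' : theta2 c p = -(w / (1 - a ^ 2)) := by
    rw [theta2, ← hs, ← hw, show 2 - c ^ 2 + c ^ 2 * s = 2 * (1 - a ^ 2) by rw [ha2]; ring,
      mul_div_mul_comm]
    norm_num
  have hθ1' : theta1 c p = -(w / (1 - b ^ 2)) := by
    rw [theta1, ← hs, ← hw, show 2 - c ^ 2 - c ^ 2 * s = 2 * (1 - b ^ 2) by rw [hb2]; ring,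
      mul_div_mul_comm]
    norm_num
  obtain ⟨t, rfl⟩ : ∃ t, θ = -t := ⟨-θ, by ring⟩
  rw [hθ2', neg_lt_neg_iff] at hθ2
  rw [hθ1', Ne, neg_inj] at hθ1
  have hS : 0 < w / (1 - a ^ 2) := div_pos hw0 (by linarith)
  have hST : w / (1 - a ^ 2) < w / (1 - b ^ 2) :=
    div_lt_div_of_pos_left hw0 (by linarith) (by nlinarith)
  have ht0 : 0 < t := hS.trans hθ2
  refine no_integer ha hab hb2a hS hST hθ2 hθ1 m hm ?_
  rw [← hL, Lfun, ← haK, ← hbK, ← hw, hxi, hsum, ← arg_eq ha ha1 hb hw0 ht0,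
    ← arg_eq hb hb1 ha hw0 ht0, mul_comm (b ^ 2) (a ^ 2), add_comm (b ^ 2) (a ^ 2)]
end
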